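/- arXiv:math/0110298 — 2 statements merged into one kernel-verified Lean document; each statement's English description precedes it below -/
import Mathlib

section
/- Let 2 < p < ∞ and let f : ℂ → ℂ be measurable, compactly supported, and in L^p(ℂ) (with respect to Lebesgue measure μ). Then for every z ∈ ℂ the function w ↦ f(w)/(z − w) is integrable, and the Cauchy transform Cf : ℂ → ℂ defined by Cf(z) = (1/π)∫_ℂ f(w)/(z − w) dμ(w) is Hölder continuous with exponent 1 − 2/p: there exists a constant C ≥ 0 such that |Cf(z) − Cf(z')| ≤ C·|z − z'|^{1−2/p} for all z, z' ∈ ℂ. -/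
open MeasureTheory Complex

/-!
The increment `(z - w)⁻¹ - (z' - w)⁻¹` of the Cauchy kernel is homogeneous of degree `-1`, so its
`L^q` norm in `w` is `‖z - z'‖ ^ (2 / q - 1)` times that of `(u + 1)⁻¹ - u⁻¹`. The latter is finite
exactly for `1 < q < 2`: its two simple poles are `q`-integrable for `q < 2`, its decay like
`‖u‖ ^ (-2)` for `q > 1`. Hölder's inequality with `q` conjugate to `p` gives the claim, since then
`2 / q - 1 = 1 - 2 / p`.
-/

open Module Metric
open scoped ENNReal

section HaarMeasure

variable {V F : Type*} [NormedAddCommGroup V] [NormedSpace ℝ V] [FiniteDimensional ℝ V]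
  [MeasurableSpace V] [BorelSpace V] {μ : Measure V} [μ.IsAddHaarMeasure]
  [NormedAddCommGroup F] {q : ℝ≥0∞}

lemma memLp_norm_inv_restrict_ball (hq : q < finrank ℝ V) (r : ℝ) :
    MemLp (fun x : V => ‖x‖⁻¹) q (μ.restrict (ball 0 r)) := by
  have hmeas : Measurable fun x : V => ‖x‖⁻¹ := by fun_prop
  have hq_top : q ≠ ∞ := hq.ne_top
  rcases eq_or_ne q 0 with rfl | hq_zero
  · exact memLp_zero_iff_aestronglyMeasurable.2 hmeas.aestronglyMeasurable
  have hdim : 1 ≤ finrank ℝ V := Nat.one_le_iff_ne_zero.2 fun h => by simp [h] at hq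
  have hq_real : q.toReal < finrank ℝ V := by
    simpa using ENNReal.toReal_strict_mono (ENNReal.natCast_ne_top _) hq
  rw [← integrable_norm_rpow_iff hmeas.aestronglyMeasurable hq_zero hq_top]
  refine integrableOn_ball_of_norm_le_rpow (C := 1) hdim hq_real (.of_forall fun x => ?_)
    (hmeas.norm.pow_const _).aestronglyMeasurable
  rw [norm_inv, norm_norm, Real.norm_of_nonneg (by positivity), one_mul,
    Real.inv_rpow (norm_nonneg x), Real.rpow_neg (norm_nonneg x)]

lemma memLp_one_add_norm_rpow_neg (hq : q ≠ ∞) {s : ℝ} (hs : finrank ℝ V < s * q.toReal) :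
    MemLp (fun x : V => (1 + ‖x‖) ^ (-s)) q μ := by
  have hq_zero : q ≠ 0 := by
    rintro rfl
    have : (0 : ℝ) ≤ finrank ℝ V := Nat.cast_nonneg _
    simp only [ENNReal.toReal_zero, mul_zero] at hs
    linarith
  have hmeas : Measurable fun x : V => (1 + ‖x‖) ^ (-s) := by fun_prop
  rw [← integrable_norm_rpow_iff hmeas.aestronglyMeasurable hq_zero hq]
  refine (integrable_one_add_norm hs).congr (.of_forall fun x => ?_)
  dsimp only
  rw [Real.norm_of_nonneg (by positivity), ← Real.rpow_mul (by positivity), neg_mul]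

lemma eLpNorm_comp_linearMap {L : V →ₗ[ℝ] V} (hL : LinearMap.det L ≠ 0) (g : V → F) :
    eLpNorm (g ∘ L) q μ =
      ENNReal.ofReal |(LinearMap.det L)⁻¹| ^ (1 / q).toReal * eLpNorm g q μ := by
  have hemb : MeasurableEmbedding L :=
    (L.equivOfDetNeZero hL).toContinuousLinearEquiv.toHomeomorph.measurableEmbedding
  rw [← hemb.eLpNorm_map_measure, Measure.map_linearMap_addHaar_eq_smul_addHaar μ hL,
    eLpNorm_smul_measure_of_ne_zero (by simpa using hL), smul_eq_mul]

end HaarMeasure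

lemma det_mulLeft_complex (a : ℂ) : LinearMap.det (LinearMap.mulLeft ℝ a) = ‖a‖ ^ 2 := by
  rw [← normSq_eq_norm_sq, ← Algebra.norm_complex_apply, Algebra.norm_apply]
  rfl

lemma eLpNorm_comp_complex_mul_left {F : Type*} [NormedAddCommGroup F] {q : ℝ≥0∞}
    {a : ℂ} (ha : a ≠ 0) (g : ℂ → F) :
    eLpNorm (fun u => g (a * u)) q = ‖a‖ₑ ^ (-(2 / q.toReal)) * eLpNorm g q := by
  have hdet : LinearMap.det (LinearMap.mulLeft ℝ a) ≠ 0 := by simpa [det_mulLeft_complex] using ha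
  have hscale : ENNReal.ofReal |(LinearMap.det (LinearMap.mulLeft ℝ a))⁻¹| = ‖a‖ₑ ^ (-2 : ℝ) := by
    rw [det_mulLeft_complex, abs_of_nonneg (by positivity),
      ENNReal.ofReal_inv_of_pos (by positivity), ENNReal.ofReal_pow (norm_nonneg a), ofReal_norm,
      ENNReal.rpow_neg, ENNReal.rpow_two]
  have hcomp : (fun u => g (a * u)) = g ∘ LinearMap.mulLeft ℝ a :=
    funext fun u => by rw [Function.comp_apply, LinearMap.mulLeft_apply]
  rw [hcomp, eLpNorm_comp_linearMap hdet, hscale, ← ENNReal.rpow_mul, ENNReal.toReal_div,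
    ENNReal.toReal_one, mul_one_div, neg_div]

lemma holderConjugate_lt_of_lt {a b p q : ℝ≥0∞} [a.HolderConjugate b] [p.HolderConjugate q]
    (h : a < p) : q < b := by
  rw [← ENNReal.inv_lt_inv, ← ENNReal.HolderConjugate.one_sub_inv a b,
    ← ENNReal.HolderConjugate.one_sub_inv p q]
  have ha : a⁻¹ ≤ 1 := ENNReal.inv_le_one.2 (ENNReal.HolderConjugate.one_le a b)
  refine (ENNReal.cancel_of_ne ?_).tsub_lt_tsub_left_of_le ha (ENNReal.inv_lt_inv.2 h)
  exact ENNReal.sub_ne_top ENNReal.one_ne_top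

lemma two_div_toReal_sub_one_eq {p q : ℝ≥0∞} [p.HolderConjugate q] :
    2 / q.toReal - 1 = 1 - 2 / p.toReal := by
  have hp : p⁻¹ ≠ ∞ := ENNReal.inv_ne_top.2 (ENNReal.HolderConjugate.ne_zero p q)
  have hq : q⁻¹ ≠ ∞ := ENNReal.inv_ne_top.2 (ENNReal.HolderConjugate.ne_zero q p)
  have hsum : p.toReal⁻¹ + q.toReal⁻¹ = 1 := by
    rw [← ENNReal.toReal_inv, ← ENNReal.toReal_inv, ← ENNReal.toReal_add hp hq,
      ENNReal.HolderConjugate.inv_add_inv_eq_one p q, ENNReal.toReal_one]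
  rw [div_eq_mul_inv, div_eq_mul_inv]
  linarith

lemma enorm_integral_smul_le_eLpNorm_mul_eLpNorm {α 𝕜 E : Type*} [MeasurableSpace α]
    {μ : Measure α} [NormedRing 𝕜] [NormedAddCommGroup E] [NormedSpace ℝ E] [Module 𝕜 E]
    [IsBoundedSMul 𝕜 E] {p q : ℝ≥0∞} [p.HolderConjugate q] {φ : α → 𝕜} {f : α → E}
    (hφ : AEStronglyMeasurable φ μ) (hf : AEStronglyMeasurable f μ) :
    ‖∫ x, φ x • f x ∂μ‖ₑ ≤ eLpNorm φ p μ * eLpNorm f q μ :=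
  calc ‖∫ x, φ x • f x ∂μ‖ₑ ≤ eLpNorm (φ • f) 1 μ := by
        rw [eLpNorm_one_eq_lintegral_enorm]
        exact enorm_integral_le_lintegral_enorm _
    _ ≤ eLpNorm φ p μ * eLpNorm f q μ := eLpNorm_smul_le_mul_eLpNorm hf hφ

section CauchyKernel

variable {q : ℝ≥0∞}

lemma memLp_sub_inv_restrict_ball (hq : q < 2) (z : ℂ) (r : ℝ) :
    MemLp (fun w : ℂ => (z - w)⁻¹) q (volume.restrict (ball z r)) := by
  have hball : (fun w => z - w) ⁻¹' ball 0 r = ball z r := by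
    ext w
    rw [Set.mem_preimage, mem_ball_zero_iff, mem_ball', dist_eq_norm]
  have hpres : MeasurePreserving (fun w => z - w) (volume.restrict (ball z r))
      (volume.restrict (ball 0 r)) :=
    hball ▸ (volume.measurePreserving_sub_left z).restrict_preimage measurableSet_ball
  have hq' : q < finrank ℝ ℂ := by simpa using hq
  refine ((memLp_norm_inv_restrict_ball hq' r).comp_measurePreserving hpres).of_le
    (by fun_prop) (.of_forall fun w => ?_)
  simp

/-- The increment by `h` of the Cauchy kernel `u ↦ u⁻¹`, as a function of the base point `u`. With
`h = z - z'` and `u = z' - w` the Cauchy transforms at `z` and `z'` differ by the integral against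
this kernel, up to the factor `1 / π`. -/
noncomputable def cauchyKernelDiff (h u : ℂ) : ℂ := (u + h)⁻¹ - u⁻¹

lemma measurable_cauchyKernelDiff (h : ℂ) : Measurable (cauchyKernelDiff h) := by
  unfold cauchyKernelDiff
  fun_prop

lemma cauchyKernelDiff_eq_inv_mul {h : ℂ} (hh : h ≠ 0) (u : ℂ) :
    cauchyKernelDiff h u = h⁻¹ * cauchyKernelDiff 1 (h⁻¹ * u) := by
  have hadd : u + h = h * (h⁻¹ * u + 1) := by field_simp
  rw [cauchyKernelDiff, cauchyKernelDiff, hadd, mul_inv, mul_inv h⁻¹, mul_sub, inv_inv,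
    inv_mul_cancel_left₀ hh]

lemma eLpNorm_cauchyKernelDiff {h : ℂ} (hh : h ≠ 0) :
    eLpNorm (cauchyKernelDiff h) q =
      ‖h‖ₑ ^ (2 / q.toReal - 1) * eLpNorm (cauchyKernelDiff 1) q := by
  have hsmul : cauchyKernelDiff h = h⁻¹ • fun u => cauchyKernelDiff 1 (h⁻¹ * u) :=
    funext (cauchyKernelDiff_eq_inv_mul hh)
  have hh' : ‖h‖ₑ ≠ 0 := enorm_ne_zero.2 hh
  rw [hsmul, eLpNorm_const_smul, eLpNorm_comp_complex_mul_left (inv_ne_zero hh), enorm_inv hh,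
    ENNReal.inv_rpow, ENNReal.rpow_neg, inv_inv, ← mul_assoc, mul_comm ‖h‖ₑ⁻¹, ← div_eq_mul_inv,
    ENNReal.rpow_sub _ _ hh' enorm_ne_top, ENNReal.rpow_one]

lemma norm_cauchyKernelDiff_one_le {u : ℂ} (hu : 2 ≤ ‖u‖) :
    ‖cauchyKernelDiff 1 u‖ ≤ 5 * (1 + ‖u‖) ^ (-2 : ℝ) := by
  have hle : ‖u‖ - 1 ≤ ‖u + 1‖ := by simpa using norm_sub_le_norm_add u 1
  have hu_ne : u ≠ 0 := norm_pos_iff.1 (by linarith)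
  have hu1_ne : u + 1 ≠ 0 := norm_pos_iff.1 (by linarith)
  rw [cauchyKernelDiff, inv_sub_inv hu1_ne hu_ne, norm_div, norm_mul, sub_add_cancel_left,
    norm_neg, norm_one, Real.rpow_neg (by positivity), Real.rpow_two, ← div_eq_mul_inv,
    div_le_div_iff₀ (by nlinarith) (by positivity)]
  nlinarith

lemma memLp_cauchyKernelDiff_one_restrict_ball (hq : q < 2) (r : ℝ) :
    MemLp (cauchyKernelDiff 1) q (volume.restrict (ball 0 r)) := by
  have hsub : ball (0 : ℂ) r ⊆ ball (-1) (r + 1) := ball_subset_ball' (by simp)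
  have hpole_neg_one := (memLp_sub_inv_restrict_ball hq (-1) (r + 1)).mono_measure
    (Measure.restrict_mono hsub le_rfl)
  refine ((memLp_sub_inv_restrict_ball hq 0 r).sub hpole_neg_one).ae_eq (.of_forall fun u => ?_)
  have hneg : -1 - u = -(u + 1) := by ring
  rw [Pi.sub_apply, zero_sub, hneg, inv_neg, inv_neg, cauchyKernelDiff]
  ring

lemma memLp_cauchyKernelDiff_one (hq_one : 1 < q) (hq_two : q < 2) :
    MemLp (cauchyKernelDiff 1) q := by
  classical
  have hq_real : 1 < q.toReal := by
    simpa using ENNReal.toReal_strict_mono hq_two.ne_top hq_one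
  have hdecay : MemLp (fun u : ℂ => (1 + ‖u‖) ^ (-2 : ℝ)) q :=
    memLp_one_add_norm_rpow_neg hq_two.ne_top (by simpa using hq_real)
  have hfar : MemLp (cauchyKernelDiff 1) q (volume.restrict (ball 0 2)ᶜ) := by
    refine (hdecay.restrict _).of_le_mul (c := 5)
      (measurable_cauchyKernelDiff 1).aestronglyMeasurable
      (ae_restrict_of_forall_mem measurableSet_ball.compl fun u hu => ?_)
    rw [Real.norm_of_nonneg (by positivity)]
    exact norm_cauchyKernelDiff_one_le (by simpa using hu)
  have hnear := memLp_cauchyKernelDiff_one_restrict_ball hq_two 2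
  simpa only [Set.piecewise_same] using hnear.piecewise measurableSet_ball hfar

end CauchyKernel

section CauchyTransform

variable {E : Type*} [NormedAddCommGroup E] [NormedSpace ℂ E] {f : ℂ → E} {p q : ℝ≥0∞}

/-- The solid Cauchy transform, convolution with `1 / (π z)`. It takes the junk value `0` at points
`z` where `w ↦ (z - w)⁻¹ • f w` is not integrable. -/
noncomputable def cauchyTransform (f : ℂ → E) (z : ℂ) : E :=
  (1 / (Real.pi : ℂ)) • ∫ w, (z - w)⁻¹ • f w

lemma integrable_sub_inv_smul (hp : 2 < p) (hf : Integrable f) (hfp : MemLp f p) (z : ℂ) :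
    Integrable fun w => (z - w)⁻¹ • f w := by
  have : p.HolderConjugate p.conjExponent := .conjExponent (one_le_two.trans hp.le)
  have hq : p.conjExponent < 2 := holderConjugate_lt_of_lt (a := 2) hp
  have hnear : IntegrableOn (fun w => (z - w)⁻¹ • f w) (ball z 1) :=
    memLp_one_iff_integrable.1 <| (hfp.restrict _).smul <|
      memLp_sub_inv_restrict_ball hq z 1
  have hfar : IntegrableOn (fun w => (z - w)⁻¹ • f w) (ball z 1)ᶜ := by
    refine hf.norm.integrableOn.mono' ?_
      (ae_restrict_of_forall_mem measurableSet_ball.compl fun w hw => ?_)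
    · exact (by fun_prop : Measurable fun w => (z - w)⁻¹).aestronglyMeasurable.smul
        hf.aestronglyMeasurable.restrict
    · have hzw : 1 ≤ ‖z - w‖ := by simpa [dist_eq_norm'] using hw
      rw [norm_smul, norm_inv]
      exact mul_le_of_le_one_left (norm_nonneg _) (inv_le_one_of_one_le₀ hzw)
  simpa using hnear.union hfar

lemma enorm_integral_cauchyKernelDiff_smul_le [p.HolderConjugate q]
    (hf : AEStronglyMeasurable f) {z z' : ℂ} (hzz' : z ≠ z') :
    ‖∫ w, cauchyKernelDiff (z - z') (z' - w) • f w‖ₑ ≤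
      ‖z - z'‖ₑ ^ (1 - 2 / p.toReal) * eLpNorm (cauchyKernelDiff 1) q * eLpNorm f p := by
  have hmeas := measurable_cauchyKernelDiff (z - z')
  rw [← two_div_toReal_sub_one_eq (p := p) (q := q),
    ← eLpNorm_cauchyKernelDiff (sub_ne_zero.2 hzz'),
    ← eLpNorm_comp_measurePreserving hmeas.aestronglyMeasurable
      (volume.measurePreserving_sub_left z')]
  exact enorm_integral_smul_le_eLpNorm_mul_eLpNorm
    (hmeas.comp (by fun_prop)).aestronglyMeasurable hf

lemma cauchyTransform_sub {z z' : ℂ} (hz : Integrable fun w => (z - w)⁻¹ • f w)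
    (hz' : Integrable fun w => (z' - w)⁻¹ • f w) :
    cauchyTransform f z - cauchyTransform f z' =
      (1 / (Real.pi : ℂ)) • ∫ w, cauchyKernelDiff (z - z') (z' - w) • f w := by
  rw [cauchyTransform, cauchyTransform, ← smul_sub, ← integral_sub hz hz']
  congr! 3 with w
  rw [cauchyKernelDiff, sub_smul, sub_add_sub_cancel']

lemma norm_cauchyTransform_sub_le [p.HolderConjugate q] (hp : 2 < p) (hp_top : p ≠ ∞)
    (hf : Integrable f) (hfp : MemLp f p) (z z' : ℂ) :
    ‖cauchyTransform f z - cauchyTransform f z'‖ ≤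
      Real.pi⁻¹ * (eLpNorm (cauchyKernelDiff 1) q).toReal * (eLpNorm f p).toReal *
        ‖z - z'‖ ^ (1 - 2 / p.toReal) := by
  rcases eq_or_ne z z' with rfl | hzz'
  · rw [sub_self, norm_zero]
    positivity
  have hkernel : eLpNorm (cauchyKernelDiff 1) q ≠ ∞ :=
    (memLp_cauchyKernelDiff_one ((ENNReal.HolderConjugate.lt_top_iff_one_lt p q).1 hp_top.lt_top)
      (holderConjugate_lt_of_lt (a := 2) hp)).eLpNorm_ne_top
  have hscale : ‖z - z'‖ₑ ^ (1 - 2 / p.toReal) ≠ ∞ :=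
    ENNReal.rpow_ne_top_of_ne_zero (enorm_ne_zero.2 (sub_ne_zero.2 hzz')) enorm_ne_top
  have hbound := ENNReal.toReal_mono
    (ENNReal.mul_ne_top (ENNReal.mul_ne_top hscale hkernel) hfp.eLpNorm_ne_top)
    (enorm_integral_cauchyKernelDiff_smul_le (q := q) hf.aestronglyMeasurable hzz')
  rw [toReal_enorm, ENNReal.toReal_mul, ENNReal.toReal_mul, ← ENNReal.toReal_rpow,
    toReal_enorm] at hbound
  rw [cauchyTransform_sub (integrable_sub_inv_smul hp hf hfp z)
    (integrable_sub_inv_smul hp hf hfp z'), norm_smul, norm_div, norm_one, norm_real,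
    Real.norm_of_nonneg Real.pi_nonneg, one_div]
  calc Real.pi⁻¹ * ‖∫ w, cauchyKernelDiff (z - z') (z' - w) • f w‖
      ≤ Real.pi⁻¹ * (‖z - z'‖ ^ (1 - 2 / p.toReal) *
          (eLpNorm (cauchyKernelDiff 1) q).toReal * (eLpNorm f p).toReal) := by gcongr
    _ = _ := by ring

theorem cauchy_transform_holder_general [CompleteSpace E] (hp : 2 < p) (hp_top : p ≠ ∞)
    (hf : Integrable f) (hfp : MemLp f p) :
    (∀ z : ℂ, Integrable fun w => (z - w)⁻¹ • f w) ∧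
    ∃ C ≥ (0 : ℝ), ∀ z z' : ℂ,
      ‖cauchyTransform f z - cauchyTransform f z'‖ ≤ C * ‖z - z'‖ ^ (1 - 2 / p.toReal) := by
  have : p.HolderConjugate p.conjExponent := .conjExponent (one_le_two.trans hp.le)
  exact ⟨integrable_sub_inv_smul hp hf hfp, _, by positivity,
    norm_cauchyTransform_sub_le (q := p.conjExponent) hp hp_top hf hfp⟩

end CauchyTransform

lemma integrable_of_memLp_of_hasCompactSupport {X F : Type*} [TopologicalSpace X]
    [MeasurableSpace X] {μ : Measure X} [IsFiniteMeasureOnCompacts μ] [NormedAddCommGroup F]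
    {p : ℝ≥0∞} (hp : 1 ≤ p) {f : X → F} (hf : MemLp f p μ) (hsupp : HasCompactSupport f) :
    Integrable f μ :=
  memLp_one_iff_integrable.1 <| hf.mono_exponent_of_measure_support_ne_top
    (fun _ hx => image_eq_zero_of_notMem_tsupport hx) hsupp.isCompact.measure_ne_top hp

/-- The solid Cauchy transform `Cf(z) = (1/π)∫ f(w)/(z−w) dμ(w)` of a compactly
supported `L^p` function, `p > 2`, is well defined and Hölder continuous with
exponent `1 − 2/p`. -/
theorem cauchy_transform_holder
    (p : ℝ) (hp : 2 < p) (f : ℂ → ℂ)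
    (hmeas : Measurable f) (hsupp : HasCompactSupport f)
    (hLp : MemLp f (ENNReal.ofReal p)) :
    (∀ z : ℂ, Integrable (fun w => f w / (z - w))) ∧
    ∃ C ≥ (0 : ℝ), ∀ z z' : ℂ,
      ‖(1 / (Real.pi : ℂ)) * (∫ w, f w / (z - w))
          - (1 / (Real.pi : ℂ)) * (∫ w, f w / (z' - w))‖
        ≤ C * ‖z - z'‖ ^ (1 - 2 / p) := by
  have hp' : 2 < ENNReal.ofReal p := by
    simpa using (ENNReal.ofReal_lt_ofReal_iff (by linarith)).2 hp
  have hf : Integrable f :=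
    integrable_of_memLp_of_hasCompactSupport (one_le_two.trans hp'.le) hLp hsupp
  simpa only [cauchyTransform, smul_eq_mul, inv_mul_eq_div,
    ENNReal.toReal_ofReal (by linarith : 0 ≤ p)] using
    cauchy_transform_holder_general hp' ENNReal.ofReal_ne_top hf hLp
end

section
/- Let R₀ > 0, let 1 ≤ r < ∞, and let f : ℂ → ℂ be continuous on the region E = {ζ ∈ ℂ : |ζ| ≥ R₀} and satisfy ∫_E |f|^r dμ < ∞ (Lebesgue measure). Fix z ∈ ℂ. Then there exists a sequence of radii R₁ < R₂ < ⋯ with Rₙ → ∞ such that the circle integrals ∮_{|ζ|=Rₙ} f(ζ)/(ζ − z) dζ converge to 0 as n → ∞. -/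
open MeasureTheory Complex Filter

/-!
In polar coordinates an `L^p` function `f` satisfies `∫ R · ‖f(R e^{iθ})‖_p^p dR < ∞`, where the
inner norm is taken over `θ`. As `(0, ∞)` has infinite measure, this norm is arbitrarily small at
arbitrarily large radii `R`. By Hölder the same holds for the `L^1` norm, and the latter controls
the Cauchy integral because `|R e^{iθ} / (R e^{iθ} - z)| ≤ 2` as soon as `R ≥ 2|z|`.
-/

open Set

open scoped Real ENNReal Topology

theorem frequently_lt_of_lintegral_Ioi_ne_top {φ : ℝ → ℝ≥0∞} {a : ℝ}
    (hφ : ∫⁻ x in Ioi a, φ x ≠ ∞) {ε : ℝ≥0∞} (hε : ε ≠ 0) :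
    ∃ᶠ x in atTop ⊓ ae volume, φ x < ε := by
  intro hlarge
  obtain ⟨b, hb⟩ : ∃ b, ∀ᵐ x, b ≤ x → ε ≤ φ x := by
    obtain ⟨s, hs, t, ht, hst⟩ := eventually_inf.1 hlarge
    obtain ⟨b, hb⟩ := mem_atTop_sets.1 hs
    refine ⟨b, ?_⟩
    filter_upwards [ht] with x hxt hbx using not_lt.1 (hst x ⟨hb x hbx, hxt⟩)
  refine hφ (top_unique ?_)
  calc
    ∞ = ∫⁻ _ in Ioi (max a b), ε := by simp [hε]
    _ ≤ ∫⁻ x in Ioi (max a b), φ x := by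
      refine setLIntegral_mono_ae' measurableSet_Ioi ?_
      filter_upwards [hb] with x hx hmax using hx ((le_max_right a b).trans hmax.le)
    _ ≤ ∫⁻ x in Ioi a, φ x := lintegral_mono_set (Ioi_subset_Ioi (le_max_left a b))

theorem lintegral_Ioc_eq_of_periodic {g : ℝ → ℝ≥0∞} {T : ℝ} (hg : Function.Periodic g T)
    (hT : 0 < T) (s t : ℝ) :
    ∫⁻ x in Ioc s (s + T), g x = ∫⁻ x in Ioc t (t + T), g x :=
  (isAddFundamentalDomain_Ioc hT s).setLIntegral_eq (isAddFundamentalDomain_Ioc hT t) g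
    hg.map_vadd_zmultiples

theorem memLp_of_continuousOn_of_integrableOn_norm_rpow {X F : Type*} [TopologicalSpace X]
    [MeasurableSpace X] [OpensMeasurableSpace X] [NormedAddCommGroup F]
    [SecondCountableTopologyEither X F] {μ : Measure X} {s : Set X} (hs : MeasurableSet s)
    {f : X → F} (hf : ContinuousOn f s) {r : ℝ} (hr : 0 < r)
    (hint : IntegrableOn (fun x => ‖f x‖ ^ r) s μ) :
    MemLp f (ENNReal.ofReal r) (μ.restrict s) := by
  refine (integrable_norm_rpow_iff (hf.aestronglyMeasurable hs) (ENNReal.ofReal_pos.2 hr).ne'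
    ENNReal.ofReal_ne_top).1 ?_
  rwa [ENNReal.toReal_ofReal hr.le]

theorem exists_strictMono_tendsto_zero_of_frequently_lt {α : Type*} [LinearOrder α] [NoMaxOrder α]
    [Nonempty α] [(atTop : Filter α).IsCountablyGenerated] {P : α → Prop} {ψ : α → ℝ≥0∞}
    (h : ∀ ε ≠ 0, ∃ᶠ x in atTop, P x ∧ ψ x < ε) :
    ∃ u : ℕ → α, StrictMono u ∧ (∀ n, P (u n)) ∧ Tendsto u atTop atTop ∧
      Tendsto (fun n => ψ (u n)) atTop (𝓝 0) := by
  obtain ⟨v, hv⟩ := exists_seq_tendsto (atTop : Filter α)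
  have hex (n : ℕ) : ∃ x, v n ≤ x ∧ P x ∧ ψ x < (n : ℝ≥0∞)⁻¹ :=
    frequently_atTop.1 (h _ (ENNReal.inv_ne_zero.2 (ENNReal.natCast_ne_top n))) (v n)
  choose w hvw hPw hψw using hex
  have hw : Tendsto w atTop atTop := tendsto_atTop_mono hvw hv
  have hψ : Tendsto (fun n => ψ (w n)) atTop (𝓝 0) :=
    tendsto_of_tendsto_of_tendsto_of_le_of_le tendsto_const_nhds
      ENNReal.tendsto_inv_nat_nhds_zero (fun _ => zero_le) (fun n => (hψw n).le)
  obtain ⟨k, hk, hwk⟩ := strictMono_subseq_of_tendsto_atTop hw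
  exact ⟨w ∘ k, hwk, fun n => hPw (k n), hw.comp hk.tendsto_atTop, hψ.comp hk.tendsto_atTop⟩

theorem polarCoord_symm_eq_circleMap (p : ℝ × ℝ) :
    Complex.polarCoord.symm p = circleMap 0 p.1 p.2 := by
  simp [circleMap_zero, Complex.exp_mul_I]

theorem measurable_circleMap_uncurry (c : ℂ) :
    Measurable (fun p : ℝ × ℝ => circleMap c p.1 p.2) := by
  unfold circleMap
  fun_prop

theorem lintegral_eq_lintegral_circleMap {g : ℂ → ℝ≥0∞} (hg : Measurable g) :
    ∫⁻ ζ, g ζ =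
      ∫⁻ R in Ioi (0 : ℝ), ENNReal.ofReal R * ∫⁻ θ in Ioc 0 (2 * π), g (circleMap 0 R θ) := by
  have hangle (R : ℝ) : ∫⁻ θ in Ioo (-π) π, g (circleMap 0 R θ) =
      ∫⁻ θ in Ioc 0 (2 * π), g (circleMap 0 R θ) := by
    have hper := lintegral_Ioc_eq_of_periodic ((periodic_circleMap 0 R).comp g)
      Real.two_pi_pos (-π) 0
    rw [zero_add, show -π + 2 * π = π by ring] at hper
    rw [setLIntegral_congr Ioo_ae_eq_Ioc]
    exact hper
  have hmeas : Measurable (fun p : ℝ × ℝ => ENNReal.ofReal p.1 * g (circleMap 0 p.1 p.2)) :=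
    measurable_fst.ennreal_ofReal.mul (hg.comp (measurable_circleMap_uncurry 0))
  calc
    ∫⁻ ζ, g ζ = ∫⁻ p in Ioi (0 : ℝ) ×ˢ Ioo (-π) π,
        ENNReal.ofReal p.1 * g (circleMap 0 p.1 p.2) := by
      simp only [← Complex.lintegral_comp_polarCoord_symm g, polarCoord_symm_eq_circleMap,
        polarCoord_target, smul_eq_mul]
    _ = ∫⁻ R in Ioi (0 : ℝ), ∫⁻ θ in Ioo (-π) π,
        ENNReal.ofReal R * g (circleMap 0 R θ) := by
      rw [Measure.volume_eq_prod, ← Measure.prod_restrict, lintegral_prod _ hmeas.aemeasurable]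
    _ = _ := by
      refine lintegral_congr fun R => ?_
      rw [lintegral_const_mul' _ _ ENNReal.ofReal_ne_top, hangle]

theorem ae_ae_circleMap_of_ae {P : ℂ → Prop} (hP : ∀ᵐ ζ, P ζ) :
    ∀ᵐ R ∂volume.restrict (Ioi (0 : ℝ)), ∀ᵐ θ ∂volume.restrict (Ioc 0 (2 * π)),
      P (circleMap 0 R θ) := by
  obtain ⟨N, hPN, hNmeas, hN⟩ := exists_measurable_superset_of_null (ae_iff.1 hP)
  have hind : Measurable (N.indicator (1 : ℂ → ℝ≥0∞)) := measurable_one.indicator hNmeas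
  have hmeas : Measurable fun R : ℝ => ENNReal.ofReal R *
      ∫⁻ θ in Ioc 0 (2 * π), N.indicator (1 : ℂ → ℝ≥0∞) (circleMap 0 R θ) :=
    ENNReal.measurable_ofReal.mul
      (hind.comp (measurable_circleMap_uncurry 0)).lintegral_prod_right'
  have hzero := lintegral_eq_lintegral_circleMap hind
  rw [lintegral_indicator_one hNmeas, hN, eq_comm, lintegral_eq_zero_iff hmeas] at hzero
  filter_upwards [hzero, ae_restrict_mem measurableSet_Ioi] with R hR hRpos
  have hcircle := (mul_eq_zero.1 hR).resolve_left (ENNReal.ofReal_pos.2 hRpos).ne'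
  filter_upwards [(lintegral_eq_zero_iff (hind.comp (measurable_circleMap 0 R))).1 hcircle]
    with θ hθ
  by_contra hnot
  simp [indicator_of_mem (hPN hnot)] at hθ

theorem lintegral_eq_lintegral_circleMap₀ {g : ℂ → ℝ≥0∞} (hg : AEMeasurable g) :
    ∫⁻ ζ, g ζ =
      ∫⁻ R in Ioi (0 : ℝ), ENNReal.ofReal R * ∫⁻ θ in Ioc 0 (2 * π), g (circleMap 0 R θ) := by
  rw [lintegral_congr_ae hg.ae_eq_mk, lintegral_eq_lintegral_circleMap hg.measurable_mk]
  refine lintegral_congr_ae ?_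
  filter_upwards [ae_ae_circleMap_of_ae hg.ae_eq_mk] with R hR
  rw [lintegral_congr_ae hR]

theorem ae_aestronglyMeasurable_circleMap {F : Type*} [TopologicalSpace F] {f : ℂ → F}
    (hf : AEStronglyMeasurable f) :
    ∀ᵐ R ∂volume.restrict (Ioi (0 : ℝ)),
      AEStronglyMeasurable (fun θ => f (circleMap 0 R θ)) (volume.restrict (Ioc 0 (2 * π))) := by
  filter_upwards [ae_ae_circleMap_of_ae hf.ae_eq_mk] with R hR
  exact ⟨_, hf.stronglyMeasurable_mk.comp_measurable (measurable_circleMap 0 R), hR⟩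

section CircleNorm

variable {F : Type*} [NormedAddCommGroup F] {f : ℂ → F} {p : ℝ≥0∞} {c : ℂ} {R : ℝ}

/-- Membership of `f` in `L^p` of the circle of centre `c` and radius `R`. The circle is
parametrised by `circleMap c R` on `(0, 2π]` and carries the angular measure `dθ`, not arc
length. -/
def CircleMemLp (f : ℂ → F) (p : ℝ≥0∞) (c : ℂ) (R : ℝ) : Prop :=
  MemLp (fun θ => f (circleMap c R θ)) p (volume.restrict (Ioc 0 (2 * π)))

/-- The `L^p` norm of `f` on the circle of centre `c` and radius `R`, with respect to the same
angular measure `dθ` on `(0, 2π]` as in `CircleMemLp`. -/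
noncomputable def circleELpNorm (f : ℂ → F) (p : ℝ≥0∞) (c : ℂ) (R : ℝ) : ℝ≥0∞ :=
  eLpNorm (fun θ => f (circleMap c R θ)) p (volume.restrict (Ioc 0 (2 * π)))

theorem CircleMemLp.circleIntegrable (hf : CircleMemLp f p c R) (hp : 1 ≤ p) :
    CircleIntegrable f c R :=
  (intervalIntegrable_iff_integrableOn_Ioc_of_le Real.two_pi_pos.le).2 (MemLp.integrable hp hf)

theorem CircleMemLp.circleELpNorm_one_le (hf : CircleMemLp f p c R) (hp : 1 ≤ p) :
    circleELpNorm f 1 c R ≤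
      circleELpNorm f p c R * ENNReal.ofReal (2 * π) ^ (1 - 1 / p.toReal) := by
  simpa [circleELpNorm] using eLpNorm_le_eLpNorm_mul_rpow_measure_univ hp hf.aestronglyMeasurable

theorem enorm_circleIntegral_inv_sub_smul_le [NormedSpace ℂ F] (f : ℂ → F) {z : ℂ}
    (hz : 2 * ‖z - c‖ ≤ R) :
    ‖∮ ζ in C(c, R), (ζ - z)⁻¹ • f ζ‖ₑ ≤ 2 * circleELpNorm f 1 c R := by
  have hkernel (θ : ℝ) : ‖deriv (circleMap c R) θ * (circleMap c R θ - z)⁻¹‖ ≤ 2 := by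
    have hR : 0 ≤ R := (by positivity : 0 ≤ 2 * ‖z - c‖).trans hz
    have hdist : R - ‖z - c‖ ≤ ‖circleMap c R θ - z‖ :=
      calc
        R - ‖z - c‖ = ‖circleMap c R θ - c‖ - ‖z - c‖ := by
          rw [circleMap_sub_center, norm_circleMap_zero, abs_of_nonneg hR]
        _ ≤ ‖circleMap c R θ - c - (z - c)‖ := norm_sub_norm_le _ _
        _ = ‖circleMap c R θ - z‖ := by rw [sub_sub_sub_cancel_right]
    rw [norm_mul, norm_inv, ← div_eq_mul_inv]
    refine div_le_of_le_mul₀ (norm_nonneg _) zero_le_two ?_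
    simp only [deriv_circleMap, norm_mul, norm_circleMap_zero, norm_I, abs_of_nonneg hR]
    linarith
  rw [circleIntegral, intervalIntegral.integral_of_le Real.two_pi_pos.le]
  calc
    _ ≤ ∫⁻ θ in Ioc 0 (2 * π),
        ‖deriv (circleMap c R) θ • (circleMap c R θ - z)⁻¹ • f (circleMap c R θ)‖ₑ :=
      enorm_integral_le_lintegral_enorm _
    _ ≤ ∫⁻ θ in Ioc 0 (2 * π), 2 * ‖f (circleMap c R θ)‖ₑ := by
      refine lintegral_mono fun θ => ?_
      rw [smul_smul, enorm_smul]
      gcongr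
      rw [← ofReal_norm, ← ENNReal.ofReal_ofNat]
      exact ENNReal.ofReal_le_ofReal (hkernel θ)
    _ = 2 * circleELpNorm f 1 c R := by
      rw [lintegral_const_mul' _ _ ENNReal.ofNat_ne_top, circleELpNorm,
        eLpNorm_one_eq_lintegral_enorm]

end CircleNorm

section LargeCircles

variable {F : Type*} [NormedAddCommGroup F] {f : ℂ → F} {p : ℝ≥0∞}

theorem eLpNorm_rpow_eq_lintegral_circleELpNorm_rpow (hf : AEStronglyMeasurable f) (hp₀ : p ≠ 0)
    (hp : p ≠ ∞) :
    eLpNorm f p volume ^ p.toReal =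
      ∫⁻ R in Ioi (0 : ℝ), ENNReal.ofReal R * circleELpNorm f p 0 R ^ p.toReal := by
  simp only [circleELpNorm, eLpNorm_eq_eLpNorm' hp₀ hp,
    ← lintegral_rpow_enorm_eq_rpow_eLpNorm' (ENNReal.toReal_pos hp₀ hp)]
  exact lintegral_eq_lintegral_circleMap₀ (hf.enorm.pow_const _)

theorem frequently_circleELpNorm_lt (hf : MemLp f p) (hp₀ : p ≠ 0) (hp : p ≠ ∞) {ε : ℝ≥0∞}
    (hε : ε ≠ 0) :
    ∃ᶠ R in atTop, CircleMemLp f p 0 R ∧ circleELpNorm f p 0 R < ε := by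
  have hp_pos : 0 < p.toReal := ENNReal.toReal_pos hp₀ hp
  have hfin : ∫⁻ R in Ioi (0 : ℝ), ENNReal.ofReal R * circleELpNorm f p 0 R ^ p.toReal ≠ ∞ := by
    rw [← eLpNorm_rpow_eq_lintegral_circleELpNorm_rpow hf.aestronglyMeasurable hp₀ hp]
    exact ENNReal.rpow_ne_top_of_nonneg hp_pos.le hf.eLpNorm_ne_top
  have hsmall := frequently_lt_of_lintegral_Ioi_ne_top hfin
    (mt (ENNReal.rpow_eq_zero_iff_of_pos hp_pos).1 hε)
  have hmeas := (ae_restrict_iff' measurableSet_Ioi).1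
    (ae_aestronglyMeasurable_circleMap hf.aestronglyMeasurable)
  have hradius : ∀ᶠ R : ℝ in atTop ⊓ ae volume, 1 ≤ R :=
    (eventually_ge_atTop 1).filter_mono inf_le_left
  refine Frequently.filter_mono ((hsmall.and_eventually
    (hradius.and (hmeas.filter_mono inf_le_right))).mono ?_) inf_le_left
  rintro R ⟨hR, hR₁, hRmeas⟩
  have hlt : circleELpNorm f p 0 R < ε := by
    refine (ENNReal.rpow_lt_rpow_iff hp_pos).1 (lt_of_le_of_lt ?_ hR)
    exact le_mul_of_one_le_left zero_le (ENNReal.one_le_ofReal.2 hR₁)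
  exact ⟨⟨hRmeas (zero_lt_one.trans_le hR₁), hlt.trans_le le_top⟩, hlt⟩

theorem frequently_circleELpNorm_lt_of_memLp_exterior {R₀ : ℝ}
    (hf : MemLp f p (volume.restrict {ζ : ℂ | R₀ ≤ ‖ζ‖})) (hp₀ : p ≠ 0) (hp : p ≠ ∞) {ε : ℝ≥0∞}
    (hε : ε ≠ 0) :
    ∃ᶠ R in atTop, CircleMemLp f p 0 R ∧ circleELpNorm f p 0 R < ε := by
  have hmeas : MeasurableSet {ζ : ℂ | R₀ ≤ ‖ζ‖} := measurableSet_le measurable_const measurable_norm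
  have hind : MemLp ({ζ : ℂ | R₀ ≤ ‖ζ‖}.indicator f) p := (memLp_indicator_iff_restrict hmeas).2 hf
  refine ((frequently_circleELpNorm_lt hind hp₀ hp hε).and_eventually
    (eventually_ge_atTop R₀)).mono ?_
  rintro R ⟨hR, hR₀⟩
  have hcircle : (fun θ => {ζ : ℂ | R₀ ≤ ‖ζ‖}.indicator f (circleMap 0 R θ)) =
      fun θ => f (circleMap 0 R θ) := by
    refine funext fun θ => indicator_of_mem ?_ f
    rw [mem_ofPred_eq, norm_circleMap_zero]
    exact hR₀.trans (le_abs_self R)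
  rwa [CircleMemLp, circleELpNorm, hcircle] at hR

theorem exists_strictMono_tendsto_circleELpNorm_one {R₀ : ℝ}
    (hf : MemLp f p (volume.restrict {ζ : ℂ | R₀ ≤ ‖ζ‖})) (hp₁ : 1 ≤ p) (hp : p ≠ ∞) (M : ℝ) :
    ∃ R : ℕ → ℝ, StrictMono R ∧ (∀ n, M < R n ∧ CircleIntegrable f 0 (R n)) ∧
      Tendsto R atTop atTop ∧ Tendsto (fun n => circleELpNorm f 1 0 (R n)) atTop (𝓝 0) := by
  have hp₀ : p ≠ 0 := (zero_lt_one.trans_le hp₁).ne'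
  obtain ⟨R, hmono, hR, htop, hlim⟩ := exists_strictMono_tendsto_zero_of_frequently_lt
    (P := fun R => M < R ∧ CircleMemLp f p 0 R) (ψ := circleELpNorm f p 0) fun ε hε =>
      ((frequently_circleELpNorm_lt_of_memLp_exterior hf hp₀ hp hε).and_eventually
        (eventually_gt_atTop M)).mono fun R hR => ⟨⟨hR.2, hR.1.1⟩, hR.1.2⟩
  refine ⟨R, hmono, fun n => ⟨(hR n).1, (hR n).2.circleIntegrable hp₁⟩, htop, ?_⟩
  have hexponent : 0 ≤ 1 - 1 / p.toReal := by
    have hp₁' : 1 ≤ p.toReal := (ENNReal.toReal_mono hp hp₁).trans_eq' ENNReal.toReal_one.symm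
    exact sub_nonneg.2 (div_le_one_of_le₀ hp₁' (zero_le_one.trans hp₁'))
  have hbound := ENNReal.Tendsto.mul_const hlim
    (.inr (ENNReal.rpow_ne_top_of_nonneg hexponent (ENNReal.ofReal_ne_top (r := 2 * π))))
  rw [zero_mul] at hbound
  exact tendsto_of_tendsto_of_tendsto_of_le_of_le tendsto_const_nhds hbound
    (fun _ => zero_le) (fun n => (hR n).2.circleELpNorm_one_le hp₁)

theorem tendsto_circleIntegral_inv_sub_smul [NormedSpace ℂ F] {ι : Type*} {l : Filter ι}
    {c : ℂ} {R : ι → ℝ} (hR : Tendsto R l atTop)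
    (hf : Tendsto (fun i => circleELpNorm f 1 c (R i)) l (𝓝 0)) (z : ℂ) :
    Tendsto (fun i => ∮ ζ in C(c, R i), (ζ - z)⁻¹ • f ζ) l (𝓝 0) := by
  rw [tendsto_zero_iff_enorm_tendsto_zero]
  have hbound := ENNReal.Tendsto.const_mul hf (.inr (ENNReal.ofNat_ne_top (n := 2)))
  rw [mul_zero] at hbound
  refine tendsto_of_tendsto_of_tendsto_of_le_of_le' tendsto_const_nhds hbound
    (.of_forall fun _ => zero_le) ?_
  filter_upwards [hR.eventually_ge_atTop (2 * ‖z - c‖)] with i hi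
  exact enorm_circleIntegral_inv_sub_smul_le f hi

end LargeCircles

theorem circle_integrals_vanish_along_sequence_general {F : Type*} [NormedAddCommGroup F]
    [NormedSpace ℂ F] [CompleteSpace F] {f : ℂ → F} {p : ℝ≥0∞} (hp₁ : 1 ≤ p) (hp : p ≠ ∞) {R₀ : ℝ}
    (hf : MemLp f p (volume.restrict {ζ : ℂ | R₀ ≤ ‖ζ‖})) (M : ℝ) :
    ∃ R : ℕ → ℝ, StrictMono R ∧ (∀ n, M < R n ∧ CircleIntegrable f 0 (R n)) ∧
      Tendsto R atTop atTop ∧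
      ∀ z : ℂ, Tendsto (fun n => ∮ ζ in C(0, R n), (ζ - z)⁻¹ • f ζ) atTop (𝓝 0) := by
  obtain ⟨R, hmono, hR, htop, hlim⟩ := exists_strictMono_tendsto_circleELpNorm_one hf hp₁ hp M
  exact ⟨R, hmono, hR, htop, tendsto_circleIntegral_inv_sub_smul htop hlim⟩

/-- For `f` continuous and of class `L^r` on the region `{|ζ| ≥ R₀}` and any fixed
`z ∈ ℂ`, the Cauchy-kernel contour integrals `∮_{|ζ|=R} f(ζ)/(ζ−z) dζ` vanish
along a sequence of increasing radii tending to infinity. -/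
theorem circle_integrals_vanish_along_sequence
    (R₀ : ℝ) (hR₀ : 0 < R₀) (r : ℝ) (hr : 1 ≤ r)
    (f : ℂ → ℂ)
    (hcont : ContinuousOn f {ζ : ℂ | R₀ ≤ ‖ζ‖})
    (hint : IntegrableOn (fun ζ => ‖f ζ‖ ^ r) {ζ : ℂ | R₀ ≤ ‖ζ‖} volume)
    (z : ℂ) :
    ∃ R : ℕ → ℝ, StrictMono R ∧ (∀ n, R₀ ≤ R n ∧ ‖z‖ < R n) ∧
      Tendsto R atTop atTop ∧
      Tendsto (fun n => circleIntegral (fun ζ => f ζ / (ζ - z)) 0 (R n))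
        atTop (nhds 0) := by
  have hf : MemLp f (ENNReal.ofReal r) (volume.restrict {ζ : ℂ | R₀ ≤ ‖ζ‖}) :=
    memLp_of_continuousOn_of_integrableOn_norm_rpow
      (measurableSet_le measurable_const measurable_norm) hcont (zero_lt_one.trans_le hr) hint
  obtain ⟨R, hmono, hR, htop, hlim⟩ := circle_integrals_vanish_along_sequence_general
    (ENNReal.one_le_ofReal.2 hr) ENNReal.ofReal_ne_top hf (max R₀ ‖z‖)
  exact ⟨R, hmono, fun n => (max_lt_iff.1 (hR n).1).imp_left le_of_lt, htop,
    by simpa only [div_eq_inv_mul, smul_eq_mul] using hlim z⟩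
end
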